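/- arXiv:2601.00995 — 4 statements merged into one kernel-verified Lean document; each statement's English description precedes it below -/
import Mathlib

section
/- Darwen's Theorem for grain ordering (record model): Let S1, S2, S3, S4 be field sets. If there exists a function from records over S1 to records over S2 and a function from records over S3 to records over S4, then there exists a function from records over S1 ∪ (S3 \ S2) to records over S2 ∪ S4. -/
/-!
The grain ordering obeys Armstrong's rules for functional dependencies (reflexivity, transitivity,
union), and Darwen's theorem follows from these rules alone: the fields `S1` determine `S2`, which
together with `S3 \ S2` supplies all of `S3`, which determines `S4`.
-/

section GrainOrdering

variable {Attr : Type*} {V : Attr → Type*} {S T U : Set Attr}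

/-- The type of records over the field set `S`, with the field `a` taking values in `V a`.
Restriction of records is `Set.domRestrict₂`. -/
abbrev Record (V : Attr → Type*) (S : Set Attr) := (a : ↥S) → V a

/-- The record over `S ∪ T` glued from a record over `S` and one over `T`. These need not agree on
`S ∩ T`, where the value is taken from the record over `S`. -/
def Record.union [DecidablePred (· ∈ S)] (r : Record V S) (s : Record V T) : Record V (S ∪ T) :=
  fun a => if h : (a : Attr) ∈ S then r ⟨a, h⟩ else s ⟨a, a.2.resolve_left h⟩

/-- The grain ordering: some function takes records over `S` to records over `T`. Finer grains come
first, so this is contravariant to inclusion of field sets. -/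
def GrainLE (V : Attr → Type*) (S T : Set Attr) : Prop :=
  Nonempty (Record V S → Record V T)

namespace GrainLE

theorem of_subset (h : T ⊆ S) : GrainLE V S T :=
  ⟨Set.domRestrict₂ h⟩

theorem trans : GrainLE V S T → GrainLE V T U → GrainLE V S U
  | ⟨f⟩, ⟨g⟩ => ⟨g ∘ f⟩

theorem union : GrainLE V S T → GrainLE V S U → GrainLE V S (T ∪ U)
  | ⟨f⟩, ⟨g⟩ => by
    classical
    exact ⟨fun r => (f r).union (g r)⟩

end GrainLE

end GrainOrdering

/-- Darwen's Theorem for grain ordering (record model). -/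
theorem darwen_theorem {Attr : Type*} {V : Attr → Type*}
    (S1 S2 S3 S4 : Set Attr) :
    Nonempty (((a : ↥S1) → V a) → ((a : ↥S2) → V a)) →
    Nonempty (((a : ↥S3) → V a) → ((a : ↥S4) → V a)) →
    Nonempty (((a : ↥(S1 ∪ (S3 \ S2))) → V a) → ((a : ↥(S2 ∪ S4)) → V a)) := by
  intro (h₁₂ : GrainLE V S1 S2) (h₃₄ : GrainLE V S3 S4)
  have to_S2 : GrainLE V (S1 ∪ S3 \ S2) S2 :=
    (GrainLE.of_subset Set.subset_union_left).trans h₁₂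
  have to_diff : GrainLE V (S1 ∪ S3 \ S2) (S3 \ S2) :=
    GrainLE.of_subset Set.subset_union_right
  have S3_subset : S3 ⊆ S2 ∪ S3 \ S2 :=
    Set.subset_union_right.trans Set.union_sdiff_self.superset
  have to_S3 : GrainLE V (S1 ∪ S3 \ S2) S3 :=
    (to_S2.union to_diff).trans (GrainLE.of_subset S3_subset)
  exact to_S2.union (to_S3.trans h₃₄)
end

section
/- Grain Inference for Equi-Joins, Case A (uniqueness): Let S1, S2, Jk be field sets with Jk ⊆ S1 and Jk ⊆ S2, let K1 ⊆ S1 be a grain of a collection D1 over S1, and let K2 ⊆ S2 be a grain of a collection D2 over S2. Assume the Jk-portions of the grains are comparable: K1 ∩ Jk ⊆ K2 ∩ Jk or K2 ∩ Jk ⊆ K1 ∩ Jk. Then the map sending a join pair (r1, r2) to the triple consisting of the restriction of r1 to K1 \ Jk, the restriction of r2 to K2 \ Jk, and the restriction of r1 to K1 ∩ K2 ∩ Jk, is injective on the equi-join of D1 and D2 on Jk; that is, the fields (K1 \ Jk) ∪ (K2 \ Jk) ∪ (K1 ∩ K2 ∩ Jk) uniquely identify the elements of the join result. -/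
/-- Restriction of a record over `S` to a subset `T ⊆ S`. -/
def restr {Attr : Type*} {V : Attr → Type*} {S T : Set Attr} (h : T ⊆ S)
    (r : (a : ↥S) → V a) : (a : ↥T) → V a :=
  fun a => r ⟨a.1, h a.2⟩

/-- The equi-join of collections `D1` over `S1` and `D2` over `S2` on a common
field set `Jk`. -/
def equiJoin {Attr : Type*} {V : Attr → Type*} {S1 S2 Jk : Set Attr}
    (hJ1 : Jk ⊆ S1) (hJ2 : Jk ⊆ S2)
    (D1 : Set ((a : ↥S1) → V a)) (D2 : Set ((a : ↥S2) → V a)) :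
    Set (((a : ↥S1) → V a) × ((a : ↥S2) → V a)) :=
  {p | p.1 ∈ D1 ∧ p.2 ∈ D2 ∧ restr hJ1 p.1 = restr hJ2 p.2}

section

variable {Attr : Type*} {V : Attr → Type*}

theorem restr_eq_restr_of_diff_of_inter_subset {S J K L : Set Attr} {hK : K ⊆ S} {hL : L ⊆ S}
    {r s : (a : ↥S) → V a} (hKJ : K ∩ J ⊆ L)
    (hdiff : restr (Set.sdiff_subset.trans hK : K \ J ⊆ S) r =
      restr (Set.sdiff_subset.trans hK) s)
    (hrs : restr hL r = restr hL s) : restr hK r = restr hK s := by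
  funext ⟨a, haK⟩
  by_cases haJ : a ∈ J
  · exact congrFun hrs ⟨a, hKJ ⟨haK, haJ⟩⟩
  · exact congrFun hdiff ⟨a, haK, haJ⟩

variable {S1 S2 Jk K1 K2 T : Set Attr} {hJ1 : Jk ⊆ S1} {hJ2 : Jk ⊆ S2}
  {D1 : Set ((a : ↥S1) → V a)} {D2 : Set ((a : ↥S2) → V a)}
  {p : ((a : ↥S1) → V a) × ((a : ↥S2) → V a)}

theorem swap_mem_equiJoin (hp : p ∈ equiJoin hJ1 hJ2 D1 D2) :
    p.swap ∈ equiJoin hJ2 hJ1 D2 D1 :=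
  ⟨hp.2.1, hp.1, hp.2.2.symm⟩

theorem restr_fst_eq_restr_snd_of_mem_equiJoin (hT : T ⊆ Jk)
    (hp : p ∈ equiJoin hJ1 hJ2 D1 D2) :
    restr (hT.trans hJ1) p.1 = restr (hT.trans hJ2) p.2 :=
  congrArg (restr hT) hp.2.2

theorem injOn_restr_prodMk_restr_diff_equiJoin {hK1 : K1 ⊆ S1} {hK2 : K2 ⊆ S2}
    (hg1 : Set.InjOn (restr hK1) D1) (hg2 : Set.InjOn (restr hK2) D2) :
    Set.InjOn
      (fun p : ((a : ↥S1) → V a) × ((a : ↥S2) → V a) =>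
        (restr hK1 p.1, restr (Set.sdiff_subset.trans hK2 : K2 \ Jk ⊆ S2) p.2))
      (equiJoin hJ1 hJ2 D1 D2) := by
  rintro ⟨r1, r2⟩ ⟨hr1, hr2, hr⟩ ⟨s1, s2⟩ ⟨hs1, hs2, hs⟩ heq
  obtain ⟨hkey1, hdiff2⟩ := Prod.ext_iff.1 heq
  obtain rfl : r1 = s1 := hg1 hr1 hs1 hkey1
  have hjoin : restr hJ2 r2 = restr hJ2 s2 := hr.symm.trans hs
  obtain rfl : r2 = s2 :=
    hg2 hr2 hs2 (restr_eq_restr_of_diff_of_inter_subset Set.inter_subset_right hdiff2 hjoin)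
  rfl

theorem injOn_restr_diff_prodMk_restr_equiJoin {hK1 : K1 ⊆ S1} {hK2 : K2 ⊆ S2}
    (hg1 : Set.InjOn (restr hK1) D1) (hg2 : Set.InjOn (restr hK2) D2) :
    Set.InjOn
      (fun p : ((a : ↥S1) → V a) × ((a : ↥S2) → V a) =>
        (restr (Set.sdiff_subset.trans hK1 : K1 \ Jk ⊆ S1) p.1, restr hK2 p.2))
      (equiJoin hJ1 hJ2 D1 D2) := fun _ hp _ hq heq =>
  Prod.swap_injective <| injOn_restr_prodMk_restr_diff_equiJoin hg2 hg1
    (swap_mem_equiJoin hp) (swap_mem_equiJoin hq) (congrArg Prod.swap heq)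

end

/-- Grain Inference for Equi-Joins, Case A (uniqueness): when the `Jk`-portions of the
grains are comparable, the fields `(K1 \ Jk) ∪ (K2 \ Jk) ∪ (K1 ∩ K2 ∩ Jk)` uniquely
identify equi-join results. -/
theorem equijoin_grain_caseA {Attr : Type*} {V : Attr → Type*}
    {S1 S2 Jk K1 K2 : Set Attr}
    (hJ1 : Jk ⊆ S1) (hJ2 : Jk ⊆ S2) (hK1 : K1 ⊆ S1) (hK2 : K2 ⊆ S2)
    {D1 : Set ((a : ↥S1) → V a)} {D2 : Set ((a : ↥S2) → V a)}
    (hg1 : Set.InjOn (restr hK1) D1) (hg2 : Set.InjOn (restr hK2) D2)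
    (hcomp : K1 ∩ Jk ⊆ K2 ∩ Jk ∨ K2 ∩ Jk ⊆ K1 ∩ Jk) :
    Set.InjOn
      (fun p : ((a : ↥S1) → V a) × ((a : ↥S2) → V a) =>
        (restr (show K1 \ Jk ⊆ S1 from Set.diff_subset.trans hK1) p.1,
         restr (show K2 \ Jk ⊆ S2 from Set.diff_subset.trans hK2) p.2,
         restr (show K1 ∩ K2 ∩ Jk ⊆ S1 from
           (Set.inter_subset_left.trans Set.inter_subset_left).trans hK1) p.1))
      (equiJoin hJ1 hJ2 D1 D2) := by
  intro p hp q hq heq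
  obtain ⟨hdiff1, hdiff2, hinter1⟩ : _ ∧ _ ∧ _ := by simpa only [Prod.mk.injEq] using heq
  rcases hcomp with hsub | hsub
  · have hinter_sub : K1 ∩ Jk ⊆ K1 ∩ K2 ∩ Jk := fun _ ha => ⟨⟨ha.1, (hsub ha).1⟩, ha.2⟩
    have hkey1 : restr hK1 p.1 = restr hK1 q.1 :=
      restr_eq_restr_of_diff_of_inter_subset hinter_sub hdiff1 hinter1
    exact injOn_restr_prodMk_restr_diff_equiJoin hg1 hg2 hp hq (Prod.ext hkey1 hdiff2)
  · have hinter_sub : K2 ∩ Jk ⊆ K1 ∩ K2 ∩ Jk := fun _ ha => ⟨⟨(hsub ha).1, ha.1⟩, ha.2⟩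
    have hsubJk : K1 ∩ K2 ∩ Jk ⊆ Jk := Set.inter_subset_right
    have hinter2 : restr (hsubJk.trans hJ2) p.2 = restr (hsubJk.trans hJ2) q.2 :=
      calc
        restr (hsubJk.trans hJ2) p.2 = restr (hsubJk.trans hJ1) p.1 :=
          (restr_fst_eq_restr_snd_of_mem_equiJoin hsubJk hp).symm
        _ = restr (hsubJk.trans hJ1) q.1 := hinter1
        _ = restr (hsubJk.trans hJ2) q.2 := restr_fst_eq_restr_snd_of_mem_equiJoin hsubJk hq
    have hkey2 : restr hK2 p.2 = restr hK2 q.2 :=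
      restr_eq_restr_of_diff_of_inter_subset hinter_sub hdiff2 hinter2
    exact injOn_restr_diff_prodMk_restr_equiJoin hg1 hg2 hp hq (Prod.ext hdiff1 hkey2)
end

section
/- Natural Join Corollary, Case A (uniqueness): Let S1 and S2 be field sets, let K1 ⊆ S1 be a grain of a collection D1 over S1, and let K2 ⊆ S2 be a grain of a collection D2 over S2. Consider the natural join, i.e., the equi-join on Jk = S1 ∩ S2. Assume K1 ∩ S2 ⊆ K2 ∩ S1 or K2 ∩ S1 ⊆ K1 ∩ S2. Then the map sending a join pair (r1, r2) to the triple consisting of the restriction of r1 to K1 \ S2, the restriction of r2 to K2 \ S1, and the restriction of r1 to K1 ∩ K2, is injective on the natural join of D1 and D2; that is, the fields (K1 \ S2) ∪ (K2 \ S1) ∪ (K1 ∩ K2) uniquely identify natural-join results. -/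
/-- The natural join of collections `D1` over `S1` and `D2` over `S2`:
the equi-join on all common fields `S1 ∩ S2`. -/
def naturalJoin {Attr : Type*} {V : Attr → Type*} {S1 S2 : Set Attr}
    (D1 : Set ((a : ↥S1) → V a)) (D2 : Set ((a : ↥S2) → V a)) :
    Set (((a : ↥S1) → V a) × ((a : ↥S2) → V a)) :=
  {p | p.1 ∈ D1 ∧ p.2 ∈ D2 ∧
    restr (V := V) (Set.inter_subset_left : S1 ∩ S2 ⊆ S1) p.1 =
    restr (Set.inter_subset_right : S1 ∩ S2 ⊆ S2) p.2}

/-! `K1 ∪ (K2 \ S1)` always identifies join results: `K1` determines the left record, which in turn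
fixes the right record on `S1 ∩ S2`, leaving only `K2 \ S1` to be known. If `K1 ∩ S2 ⊆ K2 ∩ S1`,
then `K1 = (K1 \ S2) ∪ (K1 ∩ K2)`, so the given fields contain this key; the other case is
symmetric, because the two records of a join pair agree on `K1 ∩ K2`. -/

section

variable {Attr : Type*} {V : Attr → Type*}

lemma restr_eq_restr_of_subset_union {S T A B : Set Attr} {hT : T ⊆ S} {hA : A ⊆ S} {hB : B ⊆ S}
    (hTAB : T ⊆ A ∪ B) {r r' : (a : ↥S) → V a}
    (hrA : restr hA r = restr hA r') (hrB : restr hB r = restr hB r') :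
    restr hT r = restr hT r' := by
  ext ⟨a, ha⟩
  rcases hTAB ha with haA | haB
  · exact congrFun hrA ⟨a, haA⟩
  · exact congrFun hrB ⟨a, haB⟩

variable {S1 S2 : Set Attr} {D1 : Set ((a : ↥S1) → V a)} {D2 : Set ((a : ↥S2) → V a)}
  {p q : ((a : ↥S1) → V a) × ((a : ↥S2) → V a)}

lemma restr_fst_eq_restr_snd_of_mem_naturalJoin (hp : p ∈ naturalJoin D1 D2) {C : Set Attr}
    (hC1 : C ⊆ S1) (hC2 : C ⊆ S2) : restr hC1 p.1 = restr hC2 p.2 :=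
  congrArg (restr (Set.subset_inter hC1 hC2)) hp.2.2

lemma restr_fst_eq_iff_restr_snd_eq_of_mem_naturalJoin (hp : p ∈ naturalJoin D1 D2)
    (hq : q ∈ naturalJoin D1 D2) {C : Set Attr} (hC1 : C ⊆ S1) (hC2 : C ⊆ S2) :
    restr hC1 p.1 = restr hC1 q.1 ↔ restr hC2 p.2 = restr hC2 q.2 := by
  rw [restr_fst_eq_restr_snd_of_mem_naturalJoin hp hC1 hC2,
    restr_fst_eq_restr_snd_of_mem_naturalJoin hq hC1 hC2]

lemma swap_mem_naturalJoin (hp : p ∈ naturalJoin D1 D2) : p.swap ∈ naturalJoin D2 D1 :=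
  ⟨hp.2.1, hp.1, (restr_fst_eq_restr_snd_of_mem_naturalJoin hp
    Set.inter_subset_right Set.inter_subset_left).symm⟩

variable {K1 K2 : Set Attr} {hK1 : K1 ⊆ S1} {hK2 : K2 ⊆ S2}

lemma injOn_naturalJoin_restr_fst_restr_snd_sdiff
    (hg1 : Set.InjOn (restr hK1) D1) (hg2 : Set.InjOn (restr hK2) D2) :
    Set.InjOn
      (fun p : ((a : ↥S1) → V a) × ((a : ↥S2) → V a) =>
        (restr hK1 p.1, restr (Set.sdiff_subset.trans hK2 : K2 \ S1 ⊆ S2) p.2))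
      (naturalJoin D1 D2) := by
  intro p hp q hq hpq
  obtain ⟨hgrain, hdiff⟩ := Prod.mk.inj hpq
  have hfst : p.1 = q.1 := hg1 hp.1 hq.1 hgrain
  have hcommon : restr (Set.inter_subset_right : S1 ∩ S2 ⊆ S2) p.2 =
      restr Set.inter_subset_right q.2 :=
    (restr_fst_eq_iff_restr_snd_eq_of_mem_naturalJoin hp hq Set.inter_subset_left _).1
      (congrArg _ hfst)
  have hcover : K2 ⊆ (K2 \ S1) ∪ (S1 ∩ S2) := by tauto_set
  have hsnd : p.2 = q.2 :=
    hg2 hp.2.1 hq.2.1 (restr_eq_restr_of_subset_union hcover hdiff hcommon)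
  exact Prod.ext hfst hsnd

lemma injOn_naturalJoin_restr_fst_sdiff_restr_snd
    (hg1 : Set.InjOn (restr hK1) D1) (hg2 : Set.InjOn (restr hK2) D2) :
    Set.InjOn
      (fun p : ((a : ↥S1) → V a) × ((a : ↥S2) → V a) =>
        (restr (Set.sdiff_subset.trans hK1 : K1 \ S2 ⊆ S1) p.1, restr hK2 p.2))
      (naturalJoin D1 D2) := by
  intro p hp q hq hpq
  obtain ⟨hdiff, hgrain⟩ := Prod.mk.inj hpq
  exact Prod.swap_injective <|
    injOn_naturalJoin_restr_fst_restr_snd_sdiff hg2 hg1 (swap_mem_naturalJoin hp)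
      (swap_mem_naturalJoin hq) (Prod.ext hgrain hdiff)

end

/-- Natural Join Corollary, Case A (uniqueness): if the portions of the grains inside
the common fields are comparable, then the fields `(K1 \ S2) ∪ (K2 \ S1) ∪ (K1 ∩ K2)`
uniquely identify natural-join results. -/
theorem natural_join_grain_caseA {Attr : Type*} {V : Attr → Type*}
    {S1 S2 K1 K2 : Set Attr} (hK1 : K1 ⊆ S1) (hK2 : K2 ⊆ S2)
    {D1 : Set ((a : ↥S1) → V a)} {D2 : Set ((a : ↥S2) → V a)}
    (hg1 : Set.InjOn (restr hK1) D1) (hg2 : Set.InjOn (restr hK2) D2)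
    (hcomp : K1 ∩ S2 ⊆ K2 ∩ S1 ∨ K2 ∩ S1 ⊆ K1 ∩ S2) :
    Set.InjOn
      (fun p : ((a : ↥S1) → V a) × ((a : ↥S2) → V a) =>
        (restr (show K1 \ S2 ⊆ S1 from Set.diff_subset.trans hK1) p.1,
         restr (show K2 \ S1 ⊆ S2 from Set.diff_subset.trans hK2) p.2,
         restr (show K1 ∩ K2 ⊆ S1 from Set.inter_subset_left.trans hK1) p.1))
      (naturalJoin D1 D2) := by
  intro p hp q hq hpq
  simp only [Prod.mk.injEq] at hpq
  obtain ⟨hdiff1, hdiff2, hinter1⟩ := hpq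
  rcases hcomp with hle | hle
  · have hcover : K1 ⊆ (K1 \ S2) ∪ (K1 ∩ K2) := by tauto_set
    have hgrain1 : restr hK1 p.1 = restr hK1 q.1 :=
      restr_eq_restr_of_subset_union hcover hdiff1 hinter1
    exact injOn_naturalJoin_restr_fst_restr_snd_sdiff hg1 hg2 hp hq (Prod.ext hgrain1 hdiff2)
  · have hcover : K2 ⊆ (K2 \ S1) ∪ (K1 ∩ K2) := by tauto_set
    have hinter2 := (restr_fst_eq_iff_restr_snd_eq_of_mem_naturalJoin hp hq _
      (Set.inter_subset_right.trans hK2)).1 hinter1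
    have hgrain2 : restr hK2 p.2 = restr hK2 q.2 :=
      restr_eq_restr_of_subset_union hcover hdiff2 hinter2
    exact injOn_naturalJoin_restr_fst_sdiff_restr_snd hg1 hg2 hp hq (Prod.ext hdiff1 hgrain2)
end

section
/- Ordered Grains Corollary, Case 1 (uniqueness): Let S1, S2, Jk be field sets with Jk ⊆ S1 and Jk ⊆ S2, let K1 ⊆ S1 be a grain of a collection D1 over S1, and let K2 ⊆ S2 be a grain of a collection D2 over S2. If the coarser grain is contained in the join key, i.e., K2 ⊆ Jk, then the map sending a join pair (r1, r2) to the restriction of r1 to K1 is injective on the equi-join of D1 and D2 on Jk; that is, the finer grain K1 alone uniquely identifies join results. -/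
section

variable {Attr : Type*} {V : Attr → Type*}

theorem restr_comp_restr {S T U : Set Attr} (hTS : T ⊆ S) (hUT : U ⊆ T) :
    restr (V := V) hUT ∘ restr hTS = restr (hUT.trans hTS) :=
  rfl

theorem injOn_restr_of_subset {S J K : Set Attr} (hKJ : K ⊆ J) (hJS : J ⊆ S)
    {D : Set ((a : ↥S) → V a)} (hK : Set.InjOn (restr (hKJ.trans hJS)) D) :
    Set.InjOn (restr hJS) D := by
  rw [← restr_comp_restr hJS hKJ] at hK
  exact hK.of_comp

variable {S1 S2 Jk : Set Attr} (hJ1 : Jk ⊆ S1) (hJ2 : Jk ⊆ S2)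
  {D1 : Set ((a : ↥S1) → V a)} {D2 : Set ((a : ↥S2) → V a)}

theorem mapsTo_fst_equiJoin : Set.MapsTo Prod.fst (equiJoin hJ1 hJ2 D1 D2) D1 :=
  fun _ hp => hp.1

theorem injOn_fst_equiJoin (hD2 : Set.InjOn (restr hJ2) D2) :
    Set.InjOn Prod.fst (equiJoin hJ1 hJ2 D1 D2) := by
  rintro ⟨r, s⟩ ⟨-, hs, hrs⟩ ⟨_, t⟩ ⟨-, ht, hrt⟩ rfl
  have hst : s = t := hD2 hs ht (hrs.symm.trans hrt)
  rw [hst]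

end

/-- Ordered Grains Corollary, Case 1 (uniqueness): if the coarser grain `K2` is
contained in the join key `Jk`, then the finer grain `K1` alone uniquely identifies
equi-join results. -/
theorem ordered_grains_case1 {Attr : Type*} {V : Attr → Type*}
    {S1 S2 Jk K1 K2 : Set Attr}
    (hJ1 : Jk ⊆ S1) (hJ2 : Jk ⊆ S2) (hK1 : K1 ⊆ S1) (hK2 : K2 ⊆ S2)
    {D1 : Set ((a : ↥S1) → V a)} {D2 : Set ((a : ↥S2) → V a)}
    (hg1 : Set.InjOn (restr hK1) D1) (hg2 : Set.InjOn (restr hK2) D2)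
    (hsub : K2 ⊆ Jk) :
    Set.InjOn
      (fun p : ((a : ↥S1) → V a) × ((a : ↥S2) → V a) => restr hK1 p.1)
      (equiJoin hJ1 hJ2 D1 D2) := by
  have hJk : Set.InjOn (restr hJ2) D2 := injOn_restr_of_subset hsub hJ2 hg2
  have hfst : Set.InjOn Prod.fst (equiJoin hJ1 hJ2 D1 D2) := injOn_fst_equiJoin hJ1 hJ2 hJk
  exact hg1.comp hfst (mapsTo_fst_equiJoin hJ1 hJ2)
end
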